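/- For every (θ, λ) ∈ [0, 2π] × [0, 1] there exist constants M > 0 and ρ with 0 < ρ ≤ 1 such that for all n ∈ ℕ the operator norm of the n-th power satisfies ‖G(θ,λ)ⁿ‖ ≤ M·ρⁿ. Moreover, if 0 < θ < 2π and 0 < λ < 1, then ρ can be taken strictly less than 1. -/

import Mathlib

/-- The matrix `A(λ)` of the CIP one-step map. -/
def cipA (l : ℝ) : Matrix (Fin 2) (Fin 2) ℝ :=
  !![(1 - l)^2 * (1 + 2*l), -((1 - l)^2 * l);
     6 * l * (1 - l), (1 - l) * (1 - 3*l)]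

/-- The matrix `B(λ)` of the CIP one-step map. -/
def cipB (l : ℝ) : Matrix (Fin 2) (Fin 2) ℝ :=
  !![l^2 * (3 - 2*l), l^2 * (1 - l);
     -(6 * l * (1 - l)), (3*l - 2) * l]

/-- The CIP amplification matrix `G(θ,λ) = A(λ) + e^{−iθ} B(λ)`. -/
noncomputable def cipG (θ l : ℝ) : Matrix (Fin 2) (Fin 2) ℂ :=
  (cipA l).map (fun x => (x : ℂ)) +
    Complex.exp (-(Complex.I * θ)) • (cipB l).map (fun x => (x : ℂ))

/-!
One CIP step translates a cubic Hermite spline by `λ` cells and interpolates the result again at the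
nodes. Cubic Hermite interpolation is an orthogonal projection for the bending energy `∫ |u''|²`, so
a step loses exactly the energy of the interpolation error. On splines whose nodal data are
multiplied by `w = e^{-iθ}` from each node to the previous one, the energy is a Hermitian form
`E`, positive definite for `w ≠ 1`. The spline is the response to the jumps of its third and second
derivatives at the nodes, which up to sign are the entries of `E v` for nodal data `v`. After the
translation these jumps sit at an interior point of each cell, and the interpolation error is the
response of a beam clamped at the ends of the cell. So the loss is `Eᴴ Q E`, where `Q` consists of
the values at `λ` of the Green function of the clamped beam and its derivatives.

For `0 < λ < 1` the loss is positive definite, so the spectral radius is less than `1` and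
Gelfand's formula gives geometric decay. In the remaining cases the energy argument degenerates, but
the amplification matrix has the form `p + q (1 - p)` with `p` idempotent and `|q| ≤ 1`.
-/

open Asymptotics Complex Filter Matrix
open scoped ComplexConjugate ComplexOrder ENNReal NNReal

section PowerBounds

theorem exists_norm_pow_le_of_spectralRadius_lt {A : Type*} [NormedRing A] [NormedAlgebra ℂ A]
    [CompleteSpace A] {a : A} {ρ : ℝ≥0} (h : spectralRadius ℂ a < ρ) :
    ∃ M : ℝ, 0 < M ∧ ∀ n : ℕ, ‖a ^ n‖ ≤ M * (ρ : ℝ) ^ n := by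
  have hρ : 0 < (ρ : ℝ) := ENNReal.coe_pos.1 (bot_le.trans_lt h)
  have hroot : ∀ᶠ n : ℕ in atTop, (‖a ^ n‖₊ : ℝ≥0∞) ^ (1 / n : ℝ) < ρ :=
    (spectrum.pow_nnnorm_pow_one_div_tendsto_nhds_spectralRadius a).eventually_lt_const h
  have hpow : ∀ᶠ n : ℕ in atTop, ‖a ^ n‖ ≤ 1 * ‖(ρ : ℝ) ^ n‖ := by
    filter_upwards [hroot, eventually_gt_atTop 0] with n hn hn0
    rw [one_div, ENNReal.rpow_inv_lt_iff (by exact_mod_cast hn0), ENNReal.rpow_natCast] at hn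
    rw [one_mul, Real.norm_of_nonneg (by positivity)]
    exact_mod_cast hn.le
  obtain ⟨M, hM, hbound⟩ := bound_of_isBigO_nat_atTop (IsBigO.of_bound 1 hpow)
  refine ⟨M, hM, fun n => ?_⟩
  have hn := hbound (pow_pos hρ n).ne'
  rwa [Real.norm_of_nonneg (by positivity)] at hn

theorem add_smul_one_sub_pow {R A : Type*} [CommSemiring R] [Ring A] [Algebra R A]
    {p : A} (hp : IsIdempotentElem p) (q : R) (n : ℕ) :
    (p + q • (1 - p)) ^ n = p + q ^ n • (1 - p) := by
  induction n with
  | zero => simp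
  | succ n ih =>
    simp only [pow_succ, ih, add_mul, mul_add, mul_smul_comm, smul_mul_assoc,
      smul_smul, mul_comm q, hp.eq, hp.mul_one_sub_self, hp.one_sub_mul_self, hp.one_sub.eq,
      smul_zero, add_zero, zero_add]

theorem norm_add_smul_one_sub_pow_le {𝕜 A : Type*} [NormedField 𝕜] [NormedRing A]
    [NormedAlgebra 𝕜 A] {p : A} (hp : IsIdempotentElem p) {q : 𝕜} (hq : ‖q‖ ≤ 1) (n : ℕ) :
    ‖(p + q • (1 - p)) ^ n‖ ≤ ‖p‖ + ‖1 - p‖ := by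
  rw [add_smul_one_sub_pow hp]
  refine (norm_add_le _ _).trans (add_le_add_right ?_ _)
  rw [norm_smul, norm_pow]
  exact mul_le_of_le_one_left (norm_nonneg _) (pow_le_one₀ (norm_nonneg _) hq)

end PowerBounds

section PosDef

variable {𝕜 : Type*} [RCLike 𝕜]

theorem posDef_fin_two {M : Matrix (Fin 2) (Fin 2) 𝕜} (hM : M.IsHermitian) (h₀ : 0 < M 0 0)
    (hdet : 0 < M.det) : M.PosDef := by
  set B : Matrix (Fin 2) (Fin 2) 𝕜 := !![1, M 0 1 / M 0 0; 0, 1] with hB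
  have hfactor : M = Bᴴ * diagonal ![M 0 0, M.det / M 0 0] * B := by
    have h00 : conj (M 0 0) = M 0 0 := hM.apply 0 0
    have h01 : conj (M 0 1) = M 1 0 := hM.apply 1 0
    ext i j
    fin_cases i <;> fin_cases j <;>
      simp [hB, Matrix.mul_apply, Fin.sum_univ_two, det_fin_two, h00, h01] <;> field_simp [h₀.ne']
    ring
  have hinj : Function.Injective B.mulVec :=
    mulVec_injective_of_isUnit ((isUnit_iff_isUnit_det B).2 (by simp [hB]))
  rw [hfactor]
  refine PosDef.conjTranspose_mul_mul_same (posDef_diagonal_iff.2 ?_) hinj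
  simp [Fin.forall_fin_two, h₀, div_pos hdet h₀]

theorem norm_lt_one_of_mem_spectrum_of_posDef_sub {n : Type*} [Fintype n] [DecidableEq n]
    {P G : Matrix n n 𝕜} (hP : P.PosDef) (hG : (P - Gᴴ * P * G).PosDef) {z : 𝕜}
    (hz : z ∈ spectrum 𝕜 G) : ‖z‖ < 1 := by
  rw [← spectrum_toLin'] at hz
  obtain ⟨v, hv⟩ := (Module.End.HasEigenvalue.of_mem_spectrum hz).exists_hasEigenvector
  have hGv : G *ᵥ v = z • v := by simpa using hv.apply_eq_smul
  have hPv := hP.re_dotProduct_pos hv.2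
  have hloss : star v ⬝ᵥ ((P - Gᴴ * P * G) *ᵥ v) =
      ((1 - ‖z‖ ^ 2 : ℝ) : 𝕜) * (star v ⬝ᵥ (P *ᵥ v)) := by
    have : star v ⬝ᵥ ((Gᴴ * P * G) *ᵥ v) = star z * z * (star v ⬝ᵥ (P *ᵥ v)) := by
      rw [← mulVec_mulVec, ← mulVec_mulVec, hGv, dotProduct_mulVec, ← star_mulVec, hGv,
        star_smul, mulVec_smul, smul_dotProduct, dotProduct_smul]
      simp only [smul_eq_mul, mul_assoc]
    rw [sub_mulVec, dotProduct_sub, this, RCLike.star_def, RCLike.conj_mul]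
    push_cast
    ring
  have hpos := hG.re_dotProduct_pos hv.2
  rw [hloss, RCLike.re_ofReal_mul] at hpos
  have := pos_of_mul_pos_left hpos hPv.le
  exact (sq_lt_one_iff₀ (norm_nonneg z)).1 (by linarith)

end PosDef

/-- The CIP amplification matrix as a function of the multiplier `w = e^{-iθ}`. -/
def cipSymbol (w : ℂ) (l : ℝ) : Matrix (Fin 2) (Fin 2) ℂ :=
  (cipA l).map (fun x => (x : ℂ)) + w • (cipB l).map (fun x => (x : ℂ))

theorem cipSymbol_eq (w : ℂ) (l : ℝ) :
    cipSymbol w l =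
      !![(1 - l) ^ 2 * (1 + 2 * l) + w * (l ^ 2 * (3 - 2 * l)),
          -((1 - l) ^ 2 * l) + w * (l ^ 2 * (1 - l));
        6 * l * (1 - l) - w * (6 * l * (1 - l)),
          (1 - l) * (1 - 3 * l) + w * ((3 * l - 2) * l)] := by
  ext i j
  fin_cases i <;> fin_cases j <;> simp [cipSymbol, cipA, cipB, sub_eq_add_neg]

theorem cipG_eq_cipSymbol (θ l : ℝ) : cipG θ l = cipSymbol (exp (-(I * θ))) l :=
  rfl

theorem conjTranspose_cipSymbol (w : ℂ) (l : ℝ) :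
    (cipSymbol w l)ᴴ = (cipSymbol (conj w) l)ᵀ := by
  ext i j
  simp [cipSymbol]

/-- The matrix of the bending energy `∫ |u''|²` over one cell, in the nodal data `u(0)`, `u'(0)`,
for the cubic Hermite splines on unit cells with `u(x - 1) = w u(x)`, `|w| = 1`: the sum over one
period of the element stiffness matrix `[[12, 6, -12, 6], [6, 4, -6, 2], …]` of a beam. -/
def blochEnergy (w : ℂ) : Matrix (Fin 2) (Fin 2) ℂ :=
  !![12 * (2 - w - conj w), 6 * (conj w - w);
     6 * (w - conj w), 8 + 2 * (w + conj w)]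

theorem isHermitian_blochEnergy (w : ℂ) : (blochEnergy w).IsHermitian := by
  ext i j
  fin_cases i <;> fin_cases j <;> simp [blochEnergy] <;> ring

/-- The values at `(l, l)` of `g`, `∂₂g`, `∂₁g` and `∂₁∂₂g`, where `g` is the Green function of the
fourth derivative on `[0, 1]` with clamped ends (value and slope zero). As a form in a point force
and a point moment, it is the energy of the response of the beam when both act at `l`. -/
noncomputable def clampedGreen (l : ℝ) : Matrix (Fin 2) (Fin 2) ℂ :=
  !![(l * (1 - l)) ^ 3 / 3, (l * (1 - l)) ^ 2 * (1 - 2 * l) / 2;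
     (l * (1 - l)) ^ 2 * (1 - 2 * l) / 2, l * (1 - l) * (1 - 3 * (l * (1 - l)))]

theorem isHermitian_clampedGreen (l : ℝ) : (clampedGreen l).IsHermitian := by
  ext i j
  fin_cases i <;> fin_cases j <;> simp [clampedGreen]

theorem posDef_blochEnergy {w : ℂ} (hw : ‖w‖ = 1) (hw1 : w ≠ 1) : (blochEnergy w).PosDef := by
  have hww : w * conj w = 1 := by simp [mul_conj, normSq_eq_norm_sq, hw]
  have hdist : 2 - w - conj w = (normSq (1 - w) : ℂ) := by
    rw [← mul_conj, map_sub, map_one]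
    linear_combination -hww
  have hpos : 0 < normSq (1 - w) := normSq_pos.2 (sub_ne_zero.2 hw1.symm)
  have hdet : (blochEnergy w).det = ((12 * normSq (1 - w) ^ 2 : ℝ) : ℂ) := by
    push_cast
    rw [← hdist, blochEnergy, det_fin_two_of]
    linear_combination (-144) * hww
  refine posDef_fin_two (isHermitian_blochEnergy w) ?_ ?_
  · simp only [blochEnergy, of_apply, cons_val', cons_val_zero, hdist]
    exact_mod_cast mul_pos (by norm_num) hpos
  · rw [hdet]
    exact_mod_cast (by positivity : 0 < 12 * normSq (1 - w) ^ 2)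

theorem posDef_clampedGreen {l : ℝ} (hl0 : 0 < l) (hl1 : l < 1) : (clampedGreen l).PosDef := by
  have hm : 0 < l * (1 - l) := mul_pos hl0 (sub_pos.2 hl1)
  have hdet : (clampedGreen l).det = (((l * (1 - l)) ^ 4 / 12 : ℝ) : ℂ) := by
    rw [clampedGreen, det_fin_two_of]
    push_cast
    ring
  refine posDef_fin_two (isHermitian_clampedGreen l) ?_ ?_
  · simp only [clampedGreen, of_apply, cons_val', cons_val_zero]
    exact_mod_cast div_pos (pow_pos hm 3) three_pos
  · rw [hdet]
    exact_mod_cast div_pos (pow_pos hm 4) (by norm_num : (0 : ℝ) < 12)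

theorem blochEnergy_sub_conjTranspose_mul_mul {w : ℂ} (hw : ‖w‖ = 1) (l : ℝ) :
    blochEnergy w - (cipSymbol w l)ᴴ * blochEnergy w * cipSymbol w l =
      (blochEnergy w)ᴴ * clampedGreen l * blochEnergy w := by
  have hww : w * conj w = 1 := by simp [mul_conj, normSq_eq_norm_sq, hw]
  rw [conjTranspose_cipSymbol, cipSymbol_eq, cipSymbol_eq, (isHermitian_blochEnergy w).eq]
  ext i j
  fin_cases i <;> fin_cases j <;>
    simp only [blochEnergy, clampedGreen, Matrix.sub_apply, transpose_apply, Matrix.mul_apply,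
      Fin.sum_univ_two, Fin.zero_eta, Fin.mk_one, of_apply, cons_val', cons_val_zero, cons_val_one,
      cons_val_fin_one] <;>
    grind

theorem norm_lt_one_of_mem_spectrum_cipSymbol {w z : ℂ} {l : ℝ} (hw : ‖w‖ = 1) (hw1 : w ≠ 1)
    (hl0 : 0 < l) (hl1 : l < 1) (hz : z ∈ spectrum ℂ (cipSymbol w l)) : ‖z‖ < 1 := by
  have hE := posDef_blochEnergy hw hw1
  refine norm_lt_one_of_mem_spectrum_of_posDef_sub hE ?_ hz
  rw [blochEnergy_sub_conjTranspose_mul_mul hw]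
  exact (posDef_clampedGreen hl0 hl1).conjTranspose_mul_mul_same
    (mulVec_injective_of_isUnit hE.isUnit)

theorem exists_norm_cipSymbol_pow_le_mul_pow {w : ℂ} {l : ℝ} (hw : ‖w‖ = 1) (hw1 : w ≠ 1)
    (hl0 : 0 < l) (hl1 : l < 1) :
    ∃ M ρ : ℝ, 0 < M ∧ 0 < ρ ∧ ρ < 1 ∧
      ∀ n : ℕ, ‖toEuclideanCLM (𝕜 := ℂ) (cipSymbol w l ^ n)‖ ≤ M * ρ ^ n := by
  have hr : spectralRadius ℂ (toEuclideanCLM (𝕜 := ℂ) (cipSymbol w l)) < (1 : ℝ≥0) :=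
    spectrum.spectralRadius_lt_of_forall_lt _ fun z hz =>
      norm_lt_one_of_mem_spectrum_cipSymbol hw hw1 hl0 hl1 (by rwa [AlgEquiv.spectrum_eq] at hz)
  obtain ⟨ρ, hrρ, hρ1⟩ := ENNReal.lt_iff_exists_nnreal_btwn.1 hr
  obtain ⟨M, hM, hbound⟩ := exists_norm_pow_le_of_spectralRadius_lt hrρ
  exact ⟨M, ρ, hM, ENNReal.coe_pos.1 (bot_le.trans_lt hrρ), by exact_mod_cast hρ1,
    fun n => by simpa only [map_pow] using hbound n⟩

theorem exists_cipSymbol_eq_add_smul_one_sub {w : ℂ} {l : ℝ} (hw : ‖w‖ = 1)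
    (hl : l ∈ Set.Icc (0 : ℝ) 1) (h : w = 1 ∨ l = 0 ∨ l = 1) :
    ∃ (p : Matrix (Fin 2) (Fin 2) ℂ) (q : ℂ), IsIdempotentElem p ∧ ‖q‖ ≤ 1 ∧
      cipSymbol w l = p + q • (1 - p) := by
  rcases h with rfl | rfl | rfl
  -- For `w = 1` the matrix is upper triangular with eigenvalues `1` and `q`.
  · refine ⟨!![1, (2 * (l : ℂ) - 1) / 6; 0, 0], (1 - 6 * l * (1 - l) : ℝ), ?_, ?_, ?_⟩
    · ext i j
      fin_cases i <;> fin_cases j <;> simp [Matrix.mul_apply]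
    · rw [norm_real, Real.norm_eq_abs, abs_le]
      constructor <;> nlinarith [hl.1, hl.2, sq_nonneg (2 * l - 1)]
    · ext i j
      fin_cases i <;> fin_cases j <;> simp [cipSymbol_eq] <;> ring
  · refine ⟨1, 0, IsIdempotentElem.one, by simp, ?_⟩
    ext i j
    fin_cases i <;> fin_cases j <;> simp [cipSymbol_eq]
  · refine ⟨0, w, IsIdempotentElem.zero, hw.le, ?_⟩
    ext i j
    fin_cases i <;> fin_cases j <;> norm_num [cipSymbol_eq]

theorem exists_norm_cipSymbol_pow_le {w : ℂ} {l : ℝ} (hw : ‖w‖ = 1)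
    (hl : l ∈ Set.Icc (0 : ℝ) 1) (h : w = 1 ∨ l = 0 ∨ l = 1) :
    ∃ M : ℝ, 0 < M ∧ ∀ n : ℕ, ‖toEuclideanCLM (𝕜 := ℂ) (cipSymbol w l ^ n)‖ ≤ M := by
  obtain ⟨p, q, hp, hq, hG⟩ := exists_cipSymbol_eq_add_smul_one_sub hw hl h
  let φ := toEuclideanCLM (n := Fin 2) (𝕜 := ℂ)
  refine ⟨‖φ p‖ + ‖1 - φ p‖ + 1, by positivity, fun n => ?_⟩
  have hn := norm_add_smul_one_sub_pow_le (hp.map φ) hq n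
  rw [hG, map_pow, map_add, map_smul, map_sub, map_one]
  linarith

theorem exp_neg_I_mul_eq_one_iff (θ : ℝ) : exp (-(I * θ)) = 1 ↔ Real.cos θ = 1 := by
  have hcos : Real.cos θ = 1 → Real.sin θ = 0 := fun h => Real.sin_eq_zero_iff_cos_eq.2 (.inl h)
  simpa [Complex.ext_iff, exp_re, exp_im] using hcos

theorem stmt_6_general (θ lam : ℝ) (hlam : lam ∈ Set.Icc (0 : ℝ) 1) :
    ∃ M ρ : ℝ, 0 < M ∧ 0 < ρ ∧ ρ ≤ 1 ∧
      (∀ n : ℕ, ‖Matrix.toEuclideanCLM (𝕜 := ℂ) ((cipG θ lam) ^ n)‖ ≤ M * ρ ^ n) ∧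
      (Real.cos θ ≠ 1 ∧ 0 < lam ∧ lam < 1 → ρ < 1) := by
  have hw : ‖exp (-(I * θ))‖ = 1 := by simp [norm_exp]
  rw [cipG_eq_cipSymbol]
  by_cases h : Real.cos θ ≠ 1 ∧ 0 < lam ∧ lam < 1
  · obtain ⟨M, ρ, hM, hρ0, hρ1, hbound⟩ := exists_norm_cipSymbol_pow_le_mul_pow hw
      (mt (exp_neg_I_mul_eq_one_iff θ).1 h.1) h.2.1 h.2.2
    exact ⟨M, ρ, hM, hρ0, hρ1.le, hbound, fun _ => hρ1⟩
  · have hdegenerate : exp (-(I * θ)) = 1 ∨ lam = 0 ∨ lam = 1 := by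
      rw [exp_neg_I_mul_eq_one_iff]
      grind
    obtain ⟨M, hM, hbound⟩ := exists_norm_cipSymbol_pow_le hw hlam hdegenerate
    exact ⟨M, 1, hM, one_pos, le_rfl, fun n => by simpa using hbound n, fun h' => (h h').elim⟩

/-- **Conditional stability.** For every `(θ,λ) ∈ [0,2π] × [0,1]` there
are constants `M > 0` and `0 < ρ ≤ 1` with `‖G(θ,λ)ⁿ‖ ≤ M ρⁿ` for all `n` (operator norm
induced by the Euclidean norm on `ℂ²`); moreover for `0 < θ < 2π`, `0 < λ < 1` one can
take `ρ < 1`. -/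
theorem stmt_6 (θ lam : ℝ) (hθ : θ ∈ Set.Icc 0 (2 * Real.pi))
    (hlam : lam ∈ Set.Icc (0:ℝ) 1) :
    ∃ M ρ : ℝ, 0 < M ∧ 0 < ρ ∧ ρ ≤ 1 ∧
      (∀ n : ℕ, ‖Matrix.toEuclideanCLM (𝕜 := ℂ) ((cipG θ lam) ^ n)‖ ≤ M * ρ ^ n) ∧
      ((0 < θ ∧ θ < 2 * Real.pi ∧ 0 < lam ∧ lam < 1) → ρ < 1) := by
  obtain ⟨M, ρ, hM, hρ0, hρ1, hbound, hlt⟩ := stmt_6_general θ lam hlam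
  refine ⟨M, ρ, hM, hρ0, hρ1, hbound, fun ⟨h0, h2π, hl⟩ => hlt ⟨fun hcos => h0.ne' ?_, hl⟩⟩
  exact (Real.cos_eq_one_iff_of_lt_of_lt (by linarith) h2π).1 hcos
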